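/- arXiv:1804.03844 — 2 statements merged into one kernel-verified Lean document; each statement's English description precedes it below -/
import Mathlib

section
/- For the Kepler Hamiltonian in Levi-Civita coordinates, the tangential Gauss–Kronecker curvature determinant equals 512/X²⁴: for (w₁, w₂, z₁, z₂) ∈ ℝ⁴ with X := w₁² + w₂² + z₁² + z₂² > 0, let u := (w₁, w₂, z₁, z₂)ᵀ, let M be the 4×4 matrix M := (2/X³)·I₄ − (12/X⁴)·u uᵀ (the Hessian of H_K := −1/(2X²)), and let G_tan be the 4×3 matrix (2/X³)·[[−w₂, −z₁, −z₂], [w₁, −z₂, z₁], [z₂, w₁, −w₂], [−z₁, w₂, w₁]] (the tangential frame obtained by quaternion multiplication of the gradient of H_K by i, j, k). Then det(G_tanᵀ M G_tan) = 512/X²⁴; in particular this curvature is positive for all (w₁, w₂, z₁, z₂) ≠ 0. -/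
open Matrix

/-!
The Hessian is `a • 1 - b • u uᵀ`, and its rank-one part vanishes on the tangent space `u^⊥`.
Left multiplication by a quaternion `q` scales the Euclidean inner product by `|q|²`, so it sends
the orthonormal quadruple `1, i, j, k` to `q` and three tangent vectors that are orthogonal to each
other and of the same length. In this frame the tangential Hessian is a scalar matrix.
-/

section RankOnePerturbation

variable {R m n : Type*} [CommRing R] [Fintype m] [DecidableEq m] {F : Matrix m n R} {u : m → R}

theorem transpose_mul_smul_one_sub_smul_vecMulVec_mul (huF : u ᵥ* F = 0) (a b : R) :
    Fᵀ * (a • 1 - b • vecMulVec u u) * F = a • (Fᵀ * F) := by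
  have hrankOne : vecMulVec u u * F = 0 := by
    rw [vecMulVec_mul, huF]
    ext i _
    exact mul_zero (u i)
  rw [Matrix.mul_assoc, Matrix.sub_mul, Matrix.smul_mul, Matrix.smul_mul, Matrix.one_mul,
    hrankOne, smul_zero, sub_zero, Matrix.mul_smul]

theorem det_transpose_mul_smul_one_sub_smul_vecMulVec_mul [Fintype n] [DecidableEq n] {s : R}
    (huF : u ᵥ* F = 0) (hF : Fᵀ * F = s • 1) (a b c : R) :
    ((c • F)ᵀ * (a • 1 - b • vecMulVec u u) * (c • F)).det =
      (a * c ^ 2 * s) ^ Fintype.card n := by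
  have hucF : u ᵥ* (c • F) = 0 := by rw [vecMul_smul, huF, smul_zero]
  rw [transpose_mul_smul_one_sub_smul_vecMulVec_mul hucF, transpose_smul, Matrix.smul_mul,
    Matrix.mul_smul, hF, smul_smul, smul_smul, smul_smul, det_smul, det_one, mul_one, sq]
  simp only [mul_assoc]

end RankOnePerturbation

section QuaternionFrame

open Quaternion

variable {R : Type*} [CommRing R]

theorem equivTuple_dotProduct_equivTuple (a b : ℍ[R]) :
    equivTuple R a ⬝ᵥ equivTuple R b = (star a * b).re := by
  simp [dotProduct, Fin.sum_univ_four]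

theorem equivTuple_mul_dotProduct_equivTuple_mul (q a b : ℍ[R]) :
    equivTuple R (q * a) ⬝ᵥ equivTuple R (q * b) =
      normSq q * (equivTuple R a ⬝ᵥ equivTuple R b) := by
  have hcancel : star (q * a) * (q * b) = normSq q • (star a * b) := by
    rw [star_mul, mul_assoc, ← mul_assoc (star q), star_mul_self, coe_mul_eq_smul, mul_smul_comm]
  rw [equivTuple_dotProduct_equivTuple, equivTuple_dotProduct_equivTuple, hcancel, re_smul,
    smul_eq_mul]

variable (R) in
/-- The imaginary quaternion units `i, j, k`, indexed by `0, 1, 2`. -/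
def imaginaryUnit (i : Fin 3) : ℍ[R] :=
  (equivTuple R).symm (Pi.single i.succ 1)

theorem equivTuple_imaginaryUnit (i : Fin 3) :
    equivTuple R (imaginaryUnit R i) = Pi.single i.succ 1 :=
  (equivTuple R).apply_symm_apply _

theorem equivTuple_one_dotProduct_imaginaryUnit (i : Fin 3) :
    equivTuple R 1 ⬝ᵥ equivTuple R (imaginaryUnit R i) = 0 := by
  rw [equivTuple_imaginaryUnit, dotProduct_single_one]
  fin_cases i <;> rfl

theorem imaginaryUnit_dotProduct_imaginaryUnit (i j : Fin 3) :
    equivTuple R (imaginaryUnit R i) ⬝ᵥ equivTuple R (imaginaryUnit R j) =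
      (1 : Matrix (Fin 3) (Fin 3) R) i j := by
  simp only [equivTuple_imaginaryUnit, dotProduct_single_one, Pi.single_apply, Fin.succ_inj,
    Matrix.one_apply, eq_comm]

/-- The frame of the tangent space `q^⊥` whose columns are the quaternion products
`q * i, q * j, q * k`, in the coordinates of the basis `1, i, j, k`. -/
def quaternionFrame (q : ℍ[R]) : Matrix (Fin 4) (Fin 3) R :=
  (of fun j => equivTuple R (q * imaginaryUnit R j))ᵀ

theorem equivTuple_vecMul_quaternionFrame (q : ℍ[R]) :
    equivTuple R q ᵥ* quaternionFrame q = 0 := by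
  ext j
  calc equivTuple R q ⬝ᵥ equivTuple R (q * imaginaryUnit R j)
      = equivTuple R (q * 1) ⬝ᵥ equivTuple R (q * imaginaryUnit R j) := by rw [mul_one]
    _ = 0 := by
      rw [equivTuple_mul_dotProduct_equivTuple_mul, equivTuple_one_dotProduct_imaginaryUnit,
        mul_zero]

theorem transpose_quaternionFrame_mul_self (q : ℍ[R]) :
    (quaternionFrame q)ᵀ * quaternionFrame q = normSq q • 1 := by
  ext i j
  calc equivTuple R (q * imaginaryUnit R i) ⬝ᵥ equivTuple R (q * imaginaryUnit R j)
      = normSq q * (1 : Matrix (Fin 3) (Fin 3) R) i j := by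
        rw [equivTuple_mul_dotProduct_equivTuple_mul, imaginaryUnit_dotProduct_imaginaryUnit]

theorem quaternionFrame_eq (q : ℍ[R]) :
    quaternionFrame q =
      !![-q.imI, -q.imJ, -q.imK;
         q.re, -q.imK, q.imJ;
         q.imK, q.re, -q.imI;
         -q.imJ, q.imI, q.re] := by
  ext i j
  -- The product formulas fail to match on structure literals, so the units are unfolded last.
  fin_cases i <;> fin_cases j <;> simp [quaternionFrame] <;> simp [imaginaryUnit]

end QuaternionFrame

theorem Kepler_tangential_curvature_general {K : Type*} [Field K]
    (w₁ w₂ z₁ z₂ : K) (X : K) (hX : X = w₁ ^ 2 + w₂ ^ 2 + z₁ ^ 2 + z₂ ^ 2)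
    (hX0 : X ≠ 0)
    (u : Fin 4 → K) (hu : u = ![w₁, w₂, z₁, z₂])
    (M : Matrix (Fin 4) (Fin 4) K)
    (hM : M = (2 / X ^ 3) • (1 : Matrix (Fin 4) (Fin 4) K) -
        (12 / X ^ 4) • Matrix.of (fun i j => u i * u j))
    (Gtan : Matrix (Fin 4) (Fin 3) K)
    (hGtan : Gtan = (2 / X ^ 3) • !![-w₂, -z₁, -z₂;
                                      w₁, -z₂, z₁;
                                      z₂, w₁, -w₂;
                                      -z₁, w₂, w₁]) :
    (Gtanᵀ * M * Gtan).det = 512 / X ^ 24 := by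
  let q : Quaternion K := ⟨w₁, w₂, z₁, z₂⟩
  have hframe : Gtan = (2 / X ^ 3) • quaternionFrame q := by rw [hGtan, quaternionFrame_eq]
  have huq : u ᵥ* quaternionFrame q = 0 := hu ▸ equivTuple_vecMul_quaternionFrame q
  have hconformal : (quaternionFrame q)ᵀ * quaternionFrame q = X • 1 := by
    rw [transpose_quaternionFrame_mul_self, Quaternion.normSq_def', hX]
  have hrankOne : M = (2 / X ^ 3) • 1 - (12 / X ^ 4) • vecMulVec u u := hM
  rw [hrankOne, hframe, det_transpose_mul_smul_one_sub_smul_vecMulVec_mul huq hconformal,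
    Fintype.card_fin]
  calc (2 / X ^ 3 * (2 / X ^ 3) ^ 2 * X) ^ 3
      = (8 / X ^ 8) ^ 3 := by
        congr 1
        field_simp
        norm_num
    _ = 512 / X ^ 24 := by ring

/-- For the Kepler Hamiltonian in Levi-Civita coordinates, the tangential
Gauss–Kronecker curvature determinant equals 512 / X²⁴, and in particular is
positive. -/
theorem Kepler_tangential_curvature
    (w₁ w₂ z₁ z₂ : ℝ) (X : ℝ) (hX : X = w₁ ^ 2 + w₂ ^ 2 + z₁ ^ 2 + z₂ ^ 2)
    (hXpos : 0 < X)
    (u : Fin 4 → ℝ) (hu : u = ![w₁, w₂, z₁, z₂])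
    (M : Matrix (Fin 4) (Fin 4) ℝ)
    (hM : M = (2 / X ^ 3) • (1 : Matrix (Fin 4) (Fin 4) ℝ) -
        (12 / X ^ 4) • Matrix.of (fun i j => u i * u j))
    (Gtan : Matrix (Fin 4) (Fin 3) ℝ)
    (hGtan : Gtan = (2 / X ^ 3) • !![-w₂, -z₁, -z₂;
                                      w₁, -z₂, z₁;
                                      z₂, w₁, -w₂;
                                      -z₁, w₂, w₁]) :
    (Gtanᵀ * M * Gtan).det = 512 / X ^ 24 ∧ 0 < (Gtanᵀ * M * Gtan).det := by
  have hdet := Kepler_tangential_curvature_general w₁ w₂ z₁ z₂ X hX hXpos.ne' u hu M hM Gtan hGtan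
  exact ⟨hdet, hdet ▸ by positivity⟩
end

section
/- The tangential curvature of the planar rotating Kepler Hamiltonian is positive on the bounded component at low energies: for w = (w₁, w₂), z = (z₁, z₂) ∈ ℝ², set X := w₁² + w₂² + z₁² + z₂² and L := 2(w₁z₂ − w₂z₁), and suppose 0 < X < 1 and −1/(2X²) + L ≤ −3/2. Then the curvature expression C_Rt := (512/X²⁴)·(X − 1)·(X + 1)·(X² + X + 1)·(X² − X + 1)·(−6L²X⁴ + LX⁸ − LX² + 7X⁶ − 1)·(X⁶ + 2LX² + 1)² is strictly positive. -/
/-!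
Since `(X - 1) (X + 1) (X² + X + 1) (X² - X + 1) = X⁶ - 1` is negative, only the two factors
involving `L` matter. The squared one is `X⁵ ‖∇H_R‖² / 4`, and it equals
`(1 - X³)² + 2 X² (L + X)`, which is positive because `L ≥ -X`.

In the variables `y = X²` and `u = L X²` the other factor is a concave quadratic polynomial in `u`
with vertex `-(1 - y³) / 12`, and the energy bound becomes `u ≤ (1 - 3 y) / 2`. For small `y` the
maximum over all `u` is negative. For larger `y` the vertex lies to the right of `(1 - 3 y) / 2`,
so the quadratic is at most its value there, which is `-(3 / 2) (1 - y)³ (2 - y)`.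
-/

section OrderedRing

variable {R : Type*} [CommRing R]

/-- The factor of the tangential curvature that is quadratic in the angular momentum, written in
the variables `y = X²` and `u = L X²`. -/
def curvatureQuadratic (y u : R) : R :=
  -6 * u ^ 2 - (1 - y ^ 3) * u + 7 * y ^ 3 - 1

theorem curvatureQuadratic_complete_square (y u : R) :
    24 * curvatureQuadratic y u =
      (y ^ 3) ^ 2 + 166 * y ^ 3 - 23 - (12 * u + (1 - y ^ 3)) ^ 2 := by
  unfold curvatureQuadratic
  ring

/-- Expansion at `u = (1 - 3 y) / 2`, where the energy is `-3 / 2`. -/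
theorem two_mul_curvatureQuadratic_eq (y u : R) :
    2 * curvatureQuadratic y u =
      -3 * ((1 - y) ^ 3 * (2 - y)) -
        (1 - 3 * y - 2 * u) * (-3 * (1 - 3 * y + 2 * u) - (1 - y ^ 3)) := by
  unfold curvatureQuadratic
  ring

variable [LinearOrder R] [IsStrictOrderedRing R]

theorem curvatureQuadratic_neg_of_five_mul_le_two {y : R} (hy₀ : 0 ≤ y) (hy : 5 * y ≤ 2) (u : R) :
    curvatureQuadratic y u < 0 := by
  have cube_nonneg : 0 ≤ y ^ 3 := by positivity
  have cube_le : 125 * y ^ 3 ≤ 8 := by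
    calc
      125 * y ^ 3 = (5 * y) ^ 3 := by ring
      _ ≤ 2 ^ 3 := by gcongr
      _ = 8 := by norm_num
  have cube_sq_le : (y ^ 3) ^ 2 ≤ y ^ 3 :=
    pow_le_of_le_one cube_nonneg (by linarith) two_ne_zero
  linarith [curvatureQuadratic_complete_square y u, sq_nonneg (12 * u + (1 - y ^ 3))]

theorem curvatureQuadratic_neg_of_two_le_five_mul {y u : R} (hy : 2 ≤ 5 * y) (hy₁ : y < 1)
    (hu : 2 * u ≤ 1 - 3 * y) : curvatureQuadratic y u < 0 := by
  have endpoint_pos : 0 < (1 - y) ^ 3 * (2 - y) :=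
    mul_pos (pow_pos (by linarith) 3) (by linarith)
  have slope_nonneg : 0 ≤ -3 * (1 - 3 * y + 2 * u) - (1 - y ^ 3) := by
    have cube_nonneg : 0 ≤ y ^ 3 := pow_nonneg (by linarith) 3
    linarith
  linarith [two_mul_curvatureQuadratic_eq y u, mul_nonneg (sub_nonneg.2 hu) slope_nonneg]

theorem curvatureQuadratic_neg {y u : R} (hy₀ : 0 ≤ y) (hy₁ : y < 1) (hu : 2 * u ≤ 1 - 3 * y) :
    curvatureQuadratic y u < 0 := by
  rcases le_total (5 * y) 2 with hy | hy
  · exact curvatureQuadratic_neg_of_five_mul_le_two hy₀ hy u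
  · exact curvatureQuadratic_neg_of_two_le_five_mul hy hy₁ hu

theorem neg_sum_sq_le_two_mul_cross (w₁ w₂ z₁ z₂ : R) :
    -(w₁ ^ 2 + w₂ ^ 2 + z₁ ^ 2 + z₂ ^ 2) ≤ 2 * (w₁ * z₂ - w₂ * z₁) := by
  linarith [add_sq w₁ z₂, sub_sq w₂ z₁, sq_nonneg (w₁ + z₂), sq_nonneg (w₂ - z₁)]

theorem pow_six_add_two_mul_add_one_pos {X L : R} (hX₁ : X < 1) (hL : -X ≤ L) :
    0 < X ^ 6 + 2 * L * X ^ 2 + 1 := by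
  have cube_lt_one : X ^ 3 < 1 := by
    simpa using (Odd.strictMono_pow (R := R) (by decide : Odd 3)) hX₁
  have square_pos : 0 < (1 - X ^ 3) ^ 2 := pow_pos (sub_pos.2 cube_lt_one) 2
  have cross_nonneg : 0 ≤ 2 * X ^ 2 * (L + X) := mul_nonneg (by positivity) (by linarith)
  calc
    0 < (1 - X ^ 3) ^ 2 + 2 * X ^ 2 * (L + X) := add_pos_of_pos_of_nonneg square_pos cross_nonneg
    _ = X ^ 6 + 2 * L * X ^ 2 + 1 := by ring

end OrderedRing

section OrderedField

variable {K : Type*} [Field K] [LinearOrder K] [IsStrictOrderedRing K]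

theorem neg_one_div_two_mul_sq_add_le_iff {X : K} (hX : X ≠ 0) (L c : K) :
    -1 / (2 * X ^ 2) + L ≤ c ↔ 2 * (L * X ^ 2) ≤ 1 + 2 * c * X ^ 2 := by
  have denom_pos : 0 < 2 * X ^ 2 := by positivity
  rw [← le_sub_iff_add_le, div_le_iff₀ denom_pos]
  constructor <;> intro h <;> linarith

theorem rotating_Kepler_tangential_curvature_pos_general
    (w₁ w₂ z₁ z₂ : K) (X L : K)
    (hX : X = w₁ ^ 2 + w₂ ^ 2 + z₁ ^ 2 + z₂ ^ 2)
    (hL : L = 2 * (w₁ * z₂ - w₂ * z₁))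
    (hX0 : 0 < X) (hX1 : X < 1)
    (hc : -1 / (2 * X ^ 2) + L ≤ -3 / 2) :
    0 < (512 / X ^ 24) * (X - 1) * (X + 1) * (X ^ 2 + X + 1) * (X ^ 2 - X + 1) *
        (-6 * L ^ 2 * X ^ 4 + L * X ^ 8 - L * X ^ 2 + 7 * X ^ 6 - 1) *
        (X ^ 6 + 2 * L * X ^ 2 + 1) ^ 2 := by
  have neg_le_L : -X ≤ L := by
    simpa only [hX, hL] using neg_sum_sq_le_two_mul_cross w₁ w₂ z₁ z₂
  have gradient_factor_pos := pow_six_add_two_mul_add_one_pos hX1 neg_le_L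
  have energy_bound : 2 * (L * X ^ 2) ≤ 1 - 3 * X ^ 2 := by
    linarith [(neg_one_div_two_mul_sq_add_le_iff hX0.ne' L _).1 hc]
  have quadratic_neg : curvatureQuadratic (X ^ 2) (L * X ^ 2) < 0 :=
    curvatureQuadratic_neg (sq_nonneg X) (pow_lt_one₀ hX0.le hX1 two_ne_zero) energy_bound
  have pow_six_sub_one_neg : X ^ 6 - 1 < 0 := sub_neg.2 (pow_lt_one₀ hX0.le hX1 (by norm_num))
  calc
    0 < 512 / X ^ 24 * ((X ^ 6 - 1) * curvatureQuadratic (X ^ 2) (L * X ^ 2)) *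
        (X ^ 6 + 2 * L * X ^ 2 + 1) ^ 2 :=
      mul_pos
        (mul_pos (by positivity) (mul_pos_of_neg_of_neg pow_six_sub_one_neg quadratic_neg))
        (pow_pos gradient_factor_pos 2)
    _ = _ := by
      unfold curvatureQuadratic
      ring

end OrderedField

/-- The tangential curvature of the planar rotating Kepler Hamiltonian is positive on
the bounded component at low energies. -/
theorem rotating_Kepler_tangential_curvature_pos
    (w₁ w₂ z₁ z₂ : ℝ) (X L : ℝ)
    (hX : X = w₁ ^ 2 + w₂ ^ 2 + z₁ ^ 2 + z₂ ^ 2)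
    (hL : L = 2 * (w₁ * z₂ - w₂ * z₁))
    (hX0 : 0 < X) (hX1 : X < 1)
    (hc : -1 / (2 * X ^ 2) + L ≤ -3 / 2) :
    0 < (512 / X ^ 24) * (X - 1) * (X + 1) * (X ^ 2 + X + 1) * (X ^ 2 - X + 1) *
        (-6 * L ^ 2 * X ^ 4 + L * X ^ 8 - L * X ^ 2 + 7 * X ^ 6 - 1) *
        (X ^ 6 + 2 * L * X ^ 2 + 1) ^ 2 :=
  rotating_Kepler_tangential_curvature_pos_general w₁ w₂ z₁ z₂ X L hX hL hX0 hX1 hc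
end
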